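/- arXiv:2105.12881 — 8 statements merged into one kernel-verified Lean document; each statement's English description precedes it below -/
import Mathlib

section
/- Cyclic Lemma: Let u_1, ..., u_k be nonzero vectors in ℤ² (k ≥ 1) all lying strictly in a common open half-plane through the origin, i.e. there exist integers (a,b) ≠ (0,0) with a·y_i + b·x_i > 0 for every step u_i = (x_i, y_i). Let (n_x, n_y) = u_1 + ... + u_k and suppose gcd(|n_x|, |n_y|) = 1. Then there exists exactly one index j with 0 ≤ j < k such that the cyclic shift w_j = (u_{j+1}, ..., u_k, u_1, ..., u_j) has all of its proper nonempty prefix sums P = (P_x, P_y) (sums of the first i shifted steps, 1 ≤ i ≤ k−1) strictly on the positive side of the line through the origin with direction (n_x, n_y), i.e. n_x·P_y − n_y·P_x > 0. -/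
/-!
Write `D P = nx * P.2 - ny * P.1` and let `S m` be the `m`-th prefix sum of the walk repeated
periodically, so that `S (m + k) = S m + (nx, ny)` and `D ∘ S` has period `k`. The cyclic shift by
`j` has the required property iff `D (S j) < D (S (j + i))` for `0 < i < k`, i.e. iff `j` is the
strict minimum of `D ∘ S` over a period. A minimum exists; it is strict and unique once `D ∘ S`
takes distinct values within a period. Indeed if a block `P = S (j + i) - S j` with `0 < i < k` had
`D P = 0`, coprimality would make `P` an integer multiple of `(nx, ny)` (`ne_of_coprime`), whereas
the linear form defining the half-plane is positive on both `P` and `(nx, ny) - P`, which puts that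
multiple strictly between `0` and `1`.
-/

/-- A vector `(p, q)` for which a linear form takes a value strictly between `0` and its value at
the primitive vector `(nx, ny)` is not on the line spanned by `(nx, ny)`. -/
lemma ne_of_coprime {nx ny a b p q : ℤ} (hcop : Int.gcd nx ny = 1)
    (h0 : 0 < a * q + b * p) (h1 : a * q + b * p < a * ny + b * nx) :
    nx * q - ny * p ≠ 0 := by
  intro h
  obtain ⟨x, y, hxy⟩ := Int.isCoprime_iff_gcd_eq_one.mpr hcop
  -- The Bézout coefficients exhibit the multiple: `(p, q) = t • (nx, ny)`.
  obtain ⟨t, ht⟩ : ∃ t, t = x * p + y * q := ⟨_, rfl⟩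
  have hp : p = t * nx := by subst ht; linear_combination (-p) * hxy - y * h
  have hq : q = t * ny := by subst ht; linear_combination (-q) * hxy + x * h
  have e : a * q + b * p = t * (a * ny + b * nx) := by rw [hp, hq]; ring
  have hH : 0 < a * ny + b * nx := h0.trans h1
  rw [e] at h0 h1
  have ht0 : 0 < t := pos_of_mul_pos_left h0 hH.le
  nlinarith

/-- If a `k`-periodic integer sequence takes distinct values at indices less than `k` apart, exactly
one index of the period is a strict minimum over the `k - 1` indices following it. -/
lemma existsUnique_strict_min (k : ℕ) (hk : 1 ≤ k) (D : ℕ → ℤ) (hper : ∀ m, D (m + k) = D m)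
    (hD : ∀ j i, 1 ≤ i → i ≤ k - 1 → D (j + i) ≠ D j) :
    ∃! j : Fin k, ∀ i : ℕ, 1 ≤ i → i ≤ k - 1 → D j < D (j + i) := by
  have : Nonempty (Fin k) := ⟨⟨0, hk⟩⟩
  obtain ⟨j, hj⟩ := Finite.exists_min (fun j : Fin k => D j)
  refine existsUnique_of_exists_of_unique ⟨j, fun i hi1 hi2 => ?_⟩ fun j₁ j₂ h₁ h₂ => ?_
  · refine lt_of_le_of_ne ?_ (hD j i hi1 hi2).symm
    by_cases hlt : j.1 + i < k
    · exact hj ⟨j.1 + i, hlt⟩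
    · have h := hj ⟨j.1 + i - k, by omega⟩
      change D j ≤ D (j.1 + i - k) at h
      rwa [← hper (j.1 + i - k), show j.1 + i - k + k = j.1 + i by omega] at h
  · -- Going from the smaller index to the larger, and on around to the smaller one, increases `D`.
    have key : ∀ s t : Fin k, (∀ i : ℕ, 1 ≤ i → i ≤ k - 1 → D s < D (s + i)) →
        (∀ i : ℕ, 1 ≤ i → i ≤ k - 1 → D t < D (t + i)) → ¬ s.1 < t.1 := by
      intro s t hs ht hst
      have e1 := hs (t.1 - s.1) (by omega) (by omega)
      have e2 := ht (k - (t.1 - s.1)) (by omega) (by omega)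
      rw [show s.1 + (t.1 - s.1) = t.1 by omega] at e1
      rw [show t.1 + (k - (t.1 - s.1)) = s.1 + k by omega, hper] at e2
      omega
    have a := key _ _ h₁ h₂
    have b := key _ _ h₂ h₁
    exact Fin.ext (by omega)

/-- **Cyclic Lemma.** If the steps `u 0, …, u (k-1)` in `ℤ²` are nonzero and all lie
strictly in a common open half-plane through the origin, and the endpoint
`(nx, ny) = ∑ u i` has coprime coordinates, then there is exactly one cyclic shift of
the walk all of whose proper nonempty prefix sums `P` lie strictly on the positive side
of the line through the origin with direction `(nx, ny)`, i.e. `nx * P.2 - ny * P.1 > 0`. -/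
theorem cyclic_lemma (k : ℕ) (hk : 1 ≤ k) (u : Fin k → ℤ × ℤ)
    (hne : ∀ i, u i ≠ 0)
    (hhalf : ∃ a b : ℤ, (a, b) ≠ (0, 0) ∧ ∀ i, 0 < a * (u i).2 + b * (u i).1)
    (nx ny : ℤ) (hsum : (nx, ny) = ∑ i, u i)
    (hcop : Int.gcd nx ny = 1) :
    ∃! j : Fin k, ∀ i : ℕ, 1 ≤ i → i ≤ k - 1 →
      0 < nx * (∑ l ∈ Finset.range i, u ⟨(j.1 + l) % k, Nat.mod_lt _ (by omega)⟩).2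
          - ny * (∑ l ∈ Finset.range i, u ⟨(j.1 + l) % k, Nat.mod_lt _ (by omega)⟩).1 := by
  obtain ⟨a, b, -, hpos⟩ := hhalf
  obtain ⟨v, hv⟩ : ∃ v : ℕ → ℤ × ℤ, ∀ m, v m = u ⟨m % k, Nat.mod_lt _ (by omega)⟩ :=
    ⟨_, fun _ => rfl⟩
  have hvk : ∀ m, v (k + m) = v m := fun m => by simp [hv]
  have hvpos : ∀ m, 0 < a * (v m).2 + b * (v m).1 := fun m => by rw [hv]; exact hpos _
  obtain ⟨S, hS⟩ : ∃ S : ℕ → ℤ × ℤ, ∀ m, S m = ∑ l ∈ Finset.range m, v l := ⟨_, fun _ => rfl⟩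
  have hadd : ∀ j i, S (j + i) = S j + ∑ l ∈ Finset.range i, v (j + l) := fun j i => by
    rw [hS, hS, Finset.sum_range_add]
  have hSk : ∀ m, S (m + k) = S m + (nx, ny) := by
    intro m
    have e : S k = (nx, ny) := by
      rw [hS, hsum, Finset.sum_range]
      exact Finset.sum_congr rfl fun i _ => by simp [hv, Nat.mod_eq_of_lt i.2]
    rw [add_comm m k, hadd, e, add_comm]
    simp only [hvk, hS]
  have hmono : StrictMono fun m => a * (S m).2 + b * (S m).1 := by
    refine strictMono_nat_of_lt_succ fun m => ?_
    have e := hadd m 1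
    simp only [Finset.sum_range_one, add_zero] at e
    have := hvpos m
    simp only [e, Prod.fst_add, Prod.snd_add]
    linarith
  have main := existsUnique_strict_min k hk (fun m => nx * (S m).2 - ny * (S m).1)
    (fun m => by simp only [hSk, Prod.fst_add, Prod.snd_add]; ring)
    (fun j i hi1 hi2 heq => by
      have h0 : a * (S j).2 + b * (S j).1 < a * (S (j + i)).2 + b * (S (j + i)).1 :=
        hmono (by omega)
      have h1 : a * (S (j + i)).2 + b * (S (j + i)).1 < a * (S (j + k)).2 + b * (S (j + k)).1 :=
        hmono (by omega)
      simp only [hSk, Prod.fst_add, Prod.snd_add] at h1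
      refine ne_of_coprime (a := a) (b := b) (p := (S (j + i)).1 - (S j).1)
        (q := (S (j + i)).2 - (S j).2) hcop (by linarith) (by linarith) ?_
      linear_combination heq)
  refine (existsUnique_congr fun j => forall_congr' fun i => imp_congr_right fun _ =>
    imp_congr_right fun _ => ?_).mpr main
  rw [← sub_pos (b := _ - _), hadd]
  simp only [← hv, Prod.fst_add, Prod.snd_add]
  ring_nf
end

section
/- Monotonicity of the Frobenius eigenvalue: Let n ≥ 1 and let K be an n×n real matrix with nonnegative entries that is irreducible, meaning that for every pair of indices (i,j) there exists a positive integer p with (K^p)_{ij} > 0. For x > 0 let K(x) be the matrix obtained from K by multiplying its first column by x. Then for all real 0 < x < x', the spectral radius of K(x) is strictly smaller than the spectral radius of K(x'). -/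
/-!
Write `A = K(x)` and `B = K(x')`. If `v` is an eigenvector of `A` for an eigenvalue of modulus
`r = ρ(A)`, then `u = |v|` satisfies `r u ≤ A u ≤ B u`. Irreducibility of `B` provides a
polynomial `P` in `B` (a sum of powers) with all entries positive. If `B u = r u`, then `P u` is
a multiple of `u`, hence `u` is positive everywhere, which contradicts `A u = B u` because the
first column of `K` is nonzero. So `B u - r u` is nonnegative and nonzero, and `w = P u` satisfies
`B w - r w = P (B u - r u) > 0` in every coordinate, so `s w ≤ B w` for some `s > r`. Iterating,
`s ^ k w ≤ B ^ k w`, so `s ≤ ‖B ^ k‖ ^ (1 / k)`, and Gelfand's formula gives `r < s ≤ ρ(B)`.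
-/

section

-- The `ℓ^∞` operator norm makes matrices a Banach algebra, as Gelfand's formula requires.
attribute [local instance] Matrix.linftyOpNormedRing Matrix.linftyOpNormedAlgebra

variable {ι : Type*} [Fintype ι] [DecidableEq ι]

lemma pow_entry_nonneg {B : Matrix ι ι ℝ} (hB : ∀ i j, 0 ≤ B i j) (k : ℕ) :
    ∀ i j, 0 ≤ (B ^ k) i j := by
  induction k with
  | zero => intro i j; rw [pow_zero, Matrix.one_apply]; split_ifs <;> norm_num
  | succ k ih =>
    intro i j
    rw [pow_succ, Matrix.mul_apply]
    exact Finset.sum_nonneg fun l _ => mul_nonneg (ih i l) (hB l j)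

lemma smul_pow_le_pow {K B : Matrix ι ι ℝ} {c : ℝ} (hc : 0 ≤ c) (hK : ∀ i j, 0 ≤ K i j)
    (hKB : ∀ i j, c * K i j ≤ B i j) (k : ℕ) :
    ∀ i j, c ^ k * (K ^ k) i j ≤ (B ^ k) i j := by
  have hB : ∀ i j, 0 ≤ B i j := fun i j => (mul_nonneg hc (hK i j)).trans (hKB i j)
  induction k with
  | zero => intro i j; simp
  | succ k ih =>
    intro i j
    rw [pow_succ K, pow_succ B, Matrix.mul_apply, Matrix.mul_apply, Finset.mul_sum]
    refine Finset.sum_le_sum fun l _ => ?_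
    calc c ^ (k + 1) * ((K ^ k) i l * K l j) = (c ^ k * (K ^ k) i l) * (c * K l j) := by ring
      _ ≤ _ := mul_le_mul (ih i l) (hKB l j) (mul_nonneg hc (hK l j)) (pow_entry_nonneg hB k i l)

/-- Lower Collatz–Wielandt bound: a nonnegative nonzero subinvariant vector bounds the spectral
radius of a nonnegative matrix from below. -/
lemma le_spectralRadius_of_smul_le [Nonempty ι] {B : Matrix ι ι ℝ} (hB : ∀ i j, 0 ≤ B i j)
    {w : ι → ℝ} (hw : ∀ i, 0 ≤ w i) (hw0 : w ≠ 0) {s : NNReal}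
    (hs : ∀ i, s * w i ≤ (B.mulVec w) i) :
    (s : ENNReal) ≤ spectralRadius ℂ (B.map Complex.ofReal) := by
  have : CompleteSpace (Matrix ι ι ℂ) := FiniteDimensional.complete ℂ _
  have hit : ∀ k : ℕ, ∀ i, (s : ℝ) ^ k * w i ≤ ((B ^ k).mulVec w) i := by
    intro k
    induction k with
    | zero => intro i; simp
    | succ k ih =>
      intro i
      rw [pow_succ' B, ← Matrix.mulVec_mulVec]
      calc (s : ℝ) ^ (k + 1) * w i = s ^ k * (s * w i) := by ring
        _ ≤ s ^ k * (B.mulVec w) i := by gcongr; exact hs i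
        _ = ∑ j, B i j * (s ^ k * w j) := by
          simp only [Matrix.mulVec, dotProduct, Finset.mul_sum]
          exact Finset.sum_congr rfl fun j _ => by ring
        _ ≤ _ := by
          simp only [Matrix.mulVec, dotProduct]
          exact Finset.sum_le_sum fun j _ => mul_le_mul_of_nonneg_left (ih j) (hB i j)
  set C : Matrix ι ι ℂ := B.map Complex.ofReal with hC
  have hCk : ∀ k : ℕ, C ^ k = (B ^ k).map Complex.ofReal := fun k =>
    (Matrix.map_pow B Complex.ofRealHom k).symm
  let z : ι → ℂ := fun i => (w i : ℂ)
  have hz : 0 < ‖z‖ := by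
    rw [norm_pos_iff]
    intro h
    exact hw0 (funext fun i => by simpa [z] using congrFun h i)
  have hnorm : ∀ k : ℕ, (s : ℝ) ^ k ≤ ‖C ^ k‖ := by
    intro k
    have h1 : ‖(C ^ k).mulVec z‖ ≤ ‖C ^ k‖ * ‖z‖ := Matrix.linfty_opNorm_mulVec _ _
    have h2 : (s : ℝ) ^ k * ‖z‖ ≤ ‖(C ^ k).mulVec z‖ := by
      have h3 : ‖((s : ℝ) ^ k) • z‖ ≤ ‖(C ^ k).mulVec z‖ := by
        refine (pi_norm_le_iff_of_nonneg (norm_nonneg _)).2 fun i => ?_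
        refine le_trans ?_ (norm_le_pi_norm _ i)
        have h4 : (C ^ k).mulVec z i = (((B ^ k).mulVec w i : ℝ) : ℂ) := by
          rw [hCk]
          simp [Matrix.mulVec, dotProduct, z]
        have h5 : (((s : ℝ) ^ k) • z) i = (((s : ℝ) ^ k * w i : ℝ) : ℂ) := by
          simp [z]
        rw [h4, h5, Complex.norm_real, Complex.norm_real, Real.norm_eq_abs, Real.norm_eq_abs]
        have h6 : 0 ≤ (s : ℝ) ^ k * w i := mul_nonneg (by positivity) (hw i)
        rw [abs_of_nonneg h6]
        exact (hit k i).trans (le_abs_self _)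
      rwa [norm_smul, Real.norm_of_nonneg (by positivity)] at h3
    exact le_of_mul_le_mul_right (h2.trans h1) hz
  refine ge_of_tendsto (spectrum.pow_nnnorm_pow_one_div_tendsto_nhds_spectralRadius C) ?_
  filter_upwards [Filter.eventually_gt_atTop 0] with k hk
  have h7 : (s : ENNReal) ^ k ≤ (‖C ^ k‖₊ : ENNReal) := by
    have : s ^ k ≤ ‖C ^ k‖₊ := by
      rw [← NNReal.coe_le_coe]; simpa using hnorm k
    exact_mod_cast this
  calc (s : ENNReal) = ((s : ENNReal) ^ k) ^ (1 / k : ℝ) := by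
        rw [one_div, ENNReal.pow_rpow_inv_natCast hk.ne']
    _ ≤ _ := ENNReal.rpow_le_rpow h7 (by positivity)

/-- The modulus of an eigenvector of a nonnegative matrix is subinvariant for the spectral
radius. -/
lemma exists_subinvariant [Nonempty ι] {A : Matrix ι ι ℝ} (hA : ∀ i j, 0 ≤ A i j) :
    ∃ (r : NNReal) (u : ι → ℝ), (r : ENNReal) = spectralRadius ℂ (A.map Complex.ofReal) ∧
      (∀ i, 0 ≤ u i) ∧ u ≠ 0 ∧ ∀ i, r * u i ≤ (A.mulVec u) i := by
  have : CompleteSpace (Matrix ι ι ℂ) := FiniteDimensional.complete ℂ _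
  obtain ⟨μ, hμ, hr⟩ := spectrum.exists_nnnorm_eq_spectralRadius (A.map Complex.ofReal)
  rw [← Matrix.spectrum_toLin', ← Module.End.hasEigenvalue_iff_mem_spectrum] at hμ
  obtain ⟨v, hv⟩ := hμ.exists_hasEigenvector
  refine ⟨‖μ‖₊, fun i => ‖v i‖, hr, fun i => norm_nonneg _, ?_, ?_⟩
  · intro h
    exact hv.2 (funext fun i => by simpa using congrFun h i)
  · intro i
    have h1 := congrFun hv.apply_eq_smul i
    rw [Matrix.toLin'_apply] at h1
    have h2 : ‖μ‖ * ‖v i‖ = ‖((A.map Complex.ofReal).mulVec v) i‖ := by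
      rw [h1]; simp
    rw [coe_nnnorm, h2]
    refine (norm_sum_le _ _).trans (le_of_eq ?_)
    refine Finset.sum_congr rfl fun j _ => ?_
    simp [abs_of_nonneg (hA i j)]

/-- If `P` is a positive matrix commuting with `B` and `r u ≤ B u` with `r u ≠ B u`, then `P u`
is strictly subinvariant, so `r` can be increased. -/
lemma exists_gt_smul_le [Nonempty ι] {B P : Matrix ι ι ℝ} (hP : ∀ i j, 0 < P i j)
    (hcomm : B * P = P * B) {r : NNReal} {u : ι → ℝ}
    (hu : ∀ i, r * u i ≤ (B.mulVec u) i) (hne : B.mulVec u ≠ (r : ℝ) • u) :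
    ∃ s : NNReal, r < s ∧ ∀ i, s * (P.mulVec u) i ≤ (B.mulVec (P.mulVec u)) i := by
  set w := P.mulVec u with hw
  have hstrict : ∀ i, (r : ℝ) * w i < (B.mulVec w) i := by
    intro i
    have h1 : B.mulVec w - (r : ℝ) • w = P.mulVec (B.mulVec u - (r : ℝ) • u) := by
      rw [Matrix.mulVec_sub, Matrix.mulVec_smul, Matrix.mulVec_mulVec, hcomm,
        ← Matrix.mulVec_mulVec]
    have h2 : 0 < (P.mulVec (B.mulVec u - (r : ℝ) • u)) i := by
      obtain ⟨j, hj⟩ := Function.ne_iff.1 hne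
      have hd : ∀ j, 0 ≤ (B.mulVec u - (r : ℝ) • u) j := fun j => by
        simpa using hu j
      refine Finset.sum_pos' (fun l _ => mul_nonneg (hP i l).le (hd l))
        ⟨j, Finset.mem_univ _, mul_pos (hP i j) (lt_of_le_of_ne (hd j) ?_)⟩
      intro h
      apply hj
      simpa using sub_eq_zero.1 h.symm
    rw [← h1] at h2
    simpa using h2
  -- Each coordinate tolerates all sufficiently small increases of `r`, by continuity.
  have hev : ∀ᶠ t : ℝ in nhdsWithin r (Set.Ioi (r : ℝ)), ∀ i, t * w i ≤ (B.mulVec w) i := by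
    rw [Filter.eventually_all]
    intro i
    have hc : ContinuousAt (fun t : ℝ => t * w i) r := by fun_prop
    exact ((hc.eventually_lt continuousAt_const (hstrict i)).filter_mono
      nhdsWithin_le_nhds).mono fun t ht => le_of_lt ht
  obtain ⟨t, ht, hrt⟩ := (hev.and self_mem_nhdsWithin).exists
  exact ⟨⟨t, r.2.trans (le_of_lt hrt)⟩, hrt, ht⟩

/-- Strict comparison of spectral radii of nonnegative matrices `A ≤ B`, `A ≠ B`, with `B`
irreducible. -/
lemma spectralRadius_lt_of_le [Nonempty ι] {A B : Matrix ι ι ℝ} (hA : ∀ i j, 0 ≤ A i j)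
    (hAB : ∀ i j, A i j ≤ B i j) (hirr : ∀ i j, ∃ p : ℕ, 0 < (B ^ p) i j)
    {a b : ι} (hab : A a b < B a b) :
    spectralRadius ℂ (A.map Complex.ofReal) < spectralRadius ℂ (B.map Complex.ofReal) := by
  have hB : ∀ i j, 0 ≤ B i j := fun i j => (hA i j).trans (hAB i j)
  obtain ⟨r, u, hr, hu0, hune, hAu⟩ := exists_subinvariant hA
  have hle : ∀ i, (A.mulVec u) i ≤ (B.mulVec u) i := fun i =>
    Finset.sum_le_sum fun j _ => mul_le_mul_of_nonneg_right (hAB i j) (hu0 j)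
  choose p hp using hirr
  let P : Matrix ι ι ℝ := ∑ q : ι × ι, B ^ p q.1 q.2
  have hP : ∀ i j, 0 < P i j := by
    intro i j
    rw [show P i j = ∑ q : ι × ι, (B ^ p q.1 q.2) i j from Matrix.sum_apply i j _ _]
    exact Finset.sum_pos' (fun q _ => pow_entry_nonneg hB _ i j)
      ⟨(i, j), Finset.mem_univ _, hp i j⟩
  have hcomm : B * P = P * B :=
    (Commute.sum_right _ _ _ fun q _ => (Commute.refl B).pow_right _).eq
  have hPu : ∀ i, 0 < (P.mulVec u) i := by
    obtain ⟨j, hj⟩ := Function.ne_iff.1 hune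
    exact fun i => Finset.sum_pos' (fun l _ => mul_nonneg (hP i l).le (hu0 l))
      ⟨j, Finset.mem_univ _, mul_pos (hP i j) (lt_of_le_of_ne (hu0 j) (Ne.symm hj))⟩
  have hne : B.mulVec u ≠ (r : ℝ) • u := by
    intro h
    have hpow : ∀ k : ℕ, (B ^ k).mulVec u = (r : ℝ) ^ k • u := by
      intro k
      induction k with
      | zero => simp
      | succ k ih =>
        rw [pow_succ, ← Matrix.mulVec_mulVec, h, Matrix.mulVec_smul, ih, smul_smul, pow_succ']
    have hPu' : P.mulVec u = (∑ q : ι × ι, (r : ℝ) ^ p q.1 q.2) • u := by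
      rw [Matrix.sum_mulVec, Finset.sum_smul]
      exact Finset.sum_congr rfl fun q _ => hpow _
    have hub : 0 < u b := by
      refine lt_of_le_of_ne (hu0 b) fun hb => ?_
      have := hPu b
      rw [hPu', Pi.smul_apply, ← hb, smul_zero] at this
      exact lt_irrefl _ this
    have hlt : (A.mulVec u) a < (B.mulVec u) a :=
      Finset.sum_lt_sum (fun j _ => mul_le_mul_of_nonneg_right (hAB a j) (hu0 j))
        ⟨b, Finset.mem_univ _, mul_lt_mul_of_pos_right hab hub⟩
    have := (hAu a).trans_lt hlt
    rw [h] at this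
    exact lt_irrefl _ this
  obtain ⟨s, hrs, hs⟩ := exists_gt_smul_le hP hcomm (fun i => (hAu i).trans (hle i)) hne
  rw [← hr]
  refine lt_of_lt_of_le (ENNReal.coe_lt_coe.2 hrs)
    (le_spectralRadius_of_smul_le hB (fun i => (hPu i).le) ?_ hs)
  intro h
  exact (hPu a).ne' (congrFun h a)

end

/-- **Monotonicity of the Frobenius eigenvalue.** For an irreducible nonnegative real
`n × n` matrix `K` (`n ≥ 1`), let `K(x)` be obtained from `K` by multiplying its first
column by `x > 0`. Then the spectral radius of `K(x)` is strictly increasing in `x`: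
for `0 < x < x'`, `ρ(K(x)) < ρ(K(x'))`. -/
theorem frobenius_eigenvalue_strict_mono (n : ℕ) (hn : 1 ≤ n)
    (K : Matrix (Fin n) (Fin n) ℝ)
    (hnonneg : ∀ i j, 0 ≤ K i j)
    (hirr : ∀ i j, ∃ p : ℕ, 1 ≤ p ∧ 0 < (K ^ p) i j)
    (x x' : ℝ) (hx : 0 < x) (hxx' : x < x') :
    spectralRadius ℂ
        ((Matrix.of fun i j : Fin n => if j.val = 0 then x * K i j else K i j).map
          (Complex.ofReal))
      < spectralRadius ℂ
        ((Matrix.of fun i j : Fin n => if j.val = 0 then x' * K i j else K i j).map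
          (Complex.ofReal)) := by
  have : Nonempty (Fin n) := ⟨⟨0, hn⟩⟩
  have hx' : 0 < x' := hx.trans hxx'
  let o : Fin n := ⟨0, hn⟩
  -- Positivity of a diagonal entry of a positive power forces a nonzero entry in the first column.
  obtain ⟨a, ha⟩ : ∃ a, 0 < K a o := by
    obtain ⟨p, hp1, hp⟩ := hirr o o
    by_contra! hcon
    obtain ⟨q, rfl⟩ := Nat.exists_eq_add_of_le' hp1
    rw [pow_succ, Matrix.mul_apply] at hp
    refine hp.not_ge (Finset.sum_nonpos fun l _ => ?_)
    exact mul_nonpos_of_nonneg_of_nonpos (pow_entry_nonneg hnonneg q o l) (hcon l)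
  refine spectralRadius_lt_of_le (a := a) (b := o) ?_ ?_ ?_ ?_
  · intro i j
    rw [Matrix.of_apply]
    split_ifs
    exacts [mul_nonneg hx.le (hnonneg i j), hnonneg i j]
  · intro i j
    rw [Matrix.of_apply, Matrix.of_apply]
    split_ifs
    exacts [mul_le_mul_of_nonneg_right hxx'.le (hnonneg i j), le_rfl]
  · intro i j
    obtain ⟨p, -, hp⟩ := hirr i j
    have hc : 0 < min 1 x' := lt_min one_pos hx'
    refine ⟨p, (mul_pos (pow_pos hc p) hp).trans_le
      (smul_pow_le_pow hc.le hnonneg (fun k l => ?_) p i j)⟩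
    rw [Matrix.of_apply]
    split_ifs
    · exact mul_le_mul_of_nonneg_right (min_le_right _ _) (hnonneg k l)
    · exact mul_le_of_le_one_left (hnonneg k l) (min_le_left _ _)
  · simpa [o] using mul_lt_mul_of_pos_right hxx' ha
end

section
/- For every natural number n, the identity ∑_{m=0}^{⌊n/2⌋} C(n−m, m) · C(n, m) · 2^{n−2m} = C(2n, n) holds. -/
/-! The central binomial coefficient `C(2n, n)` is the coefficient of `X ^ n` in `(1 + X) ^ (2n)`.
Writing `(1 + X) ^ 2 = X ^ 2 + (1 + 2X)` and expanding the `n`-th power in the two summands gives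
`∑ m, C(n, m) X ^ (2m) (1 + 2X) ^ (n - m)`. In the `m`-th term the coefficient of `X ^ n` is
`C(n, m) C(n - m, n - 2m) 2 ^ (n - 2m)`, where `C(n - m, n - 2m) = C(n - m, m)`, when `2m ≤ n`, and
it is zero otherwise. -/

open Polynomial in
theorem coeff_one_add_two_mul_X_pow (k j : ℕ) :
    ((1 + C 2 * X : ℕ[X]) ^ k).coeff j = k.choose j * 2 ^ j := by
  have h : (1 + C 2 * X : ℕ[X]) ^ k = ((1 + X) ^ k).comp (C 2 * X) := by simp
  rw [h, comp_C_mul_X_coeff, coeff_one_add_X_pow, Nat.cast_id]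

/-- For every natural number `n`,
`∑_{m=0}^{⌊n/2⌋} C(n-m, m) · C(n, m) · 2^{n-2m} = C(2n, n)`. -/
theorem sum_choose_choose_two_pow (n : ℕ) :
    ∑ m ∈ Finset.range (n / 2 + 1),
      Nat.choose (n - m) m * Nat.choose n m * 2 ^ (n - 2 * m)
      = Nat.choose (2 * n) n := by
  open Polynomial in
  have hexp : (1 + X : ℕ[X]) ^ (2 * n) = ∑ m ∈ Finset.range (n + 1),
      C (n.choose m) * (X ^ (2 * m) * (1 + C 2 * X) ^ (n - m)) := by
    have hsq : (1 + X : ℕ[X]) ^ 2 = X ^ 2 + (1 + C 2 * X) := by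
      rw [show (C 2 : ℕ[X]) = 2 from rfl]
      ring
    rw [pow_mul, hsq, add_pow]
    refine Finset.sum_congr rfl fun m _ => ?_
    rw [← pow_mul, mul_comm, ← Polynomial.C_eq_natCast, Nat.cast_id]
  have hcoeff := congrArg (fun p => Polynomial.coeff p n) hexp
  simp only [Polynomial.coeff_one_add_X_pow, Nat.cast_id, Polynomial.finsetSum_coeff,
    Polynomial.coeff_C_mul, Polynomial.coeff_X_pow_mul', coeff_one_add_two_mul_X_pow] at hcoeff
  rw [hcoeff]
  have hsub : Finset.range (n / 2 + 1) ⊆ Finset.range (n + 1) :=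
    Finset.range_subset_range.2 (by omega)
  rw [← Finset.sum_subset hsub]
  · refine Finset.sum_congr rfl fun m hm => ?_
    have hm' : 2 * m ≤ n := by
      have := Finset.mem_range.1 hm
      omega
    have hsymm : (n - m).choose (n - 2 * m) = (n - m).choose m :=
      Nat.choose_symm_of_eq_add (by omega)
    rw [if_pos hm', hsymm]
    ring
  · intro m _ hm
    have hm' : ¬ 2 * m ≤ n := by
      rw [Finset.mem_range] at hm
      omega
    rw [if_neg hm', mul_zero]
end

section
/- For every natural number n, the identity 4 · ∑_{m=0}^{⌊n/2⌋} C(n−m, m) · 2^{n−2m} · 3^m = 3^{n+1} + (−1)^n holds (as an identity of integers). Equivalently, ∑_{m} C(n−m,m) 2^{n−2m} 3^{m−n} = (3 + (−3)^{−n})/4, which is the probability appearing as the normalizing denominator in the analysis of the accelerated Boltzmann sampler for (1/4,1/2,1/4)-bridges. -/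
/-!
Write `S n` for the sum. Pascal's rule gives the linear recurrence
`S (n + 2) = 2 * S (n + 1) + 3 * S n` (`weightedDiagonalSum_add_two`), whose characteristic
polynomial `x ^ 2 - 2 * x - 3` has roots `3` and `-1`. The sequence `(3 ^ (n + 1) + (-1) ^ n) / 4`
satisfies the same recurrence and also takes the values `1` and `2` at `n = 0` and `n = 1`.
To make Pascal's rule easy to apply, the range of summation is extended from `m ≤ n / 2` to `m ≤ n`;
the additional terms have a vanishing binomial coefficient.
-/

/-- The sum of `C(n - m, m) * 2 ^ (n - 2 * m) * 3 ^ m` over all `m ≤ n`. The exponent `n - 2 * m` is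
truncated for `m > n / 2`, which is harmless because the binomial coefficient is then zero. -/
def weightedDiagonalSum (n : ℕ) : ℤ :=
  ∑ m ∈ Finset.range (n + 1), (Nat.choose (n - m) m : ℤ) * 2 ^ (n - 2 * m) * 3 ^ m

theorem sum_range_half_eq_weightedDiagonalSum (n : ℕ) :
    ∑ m ∈ Finset.range (n / 2 + 1), (Nat.choose (n - m) m : ℤ) * 2 ^ (n - 2 * m) * 3 ^ m
      = weightedDiagonalSum n := by
  refine Finset.sum_subset (Finset.range_subset_range.2 (by omega)) fun m _ hm => ?_
  rw [Finset.mem_range] at hm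
  rw [Nat.choose_eq_zero_of_lt (by omega)]
  simp

/-- Pascal's rule, multiplied by the weight of the term of index `m + 1`. -/
theorem weighted_choose_succ (n m : ℕ) (hm : m ≤ n) :
    (Nat.choose (n + 2 - (m + 1)) (m + 1) : ℤ) * 2 ^ (n + 2 - 2 * (m + 1)) * 3 ^ (m + 1)
      = 2 * ((Nat.choose (n + 1 - (m + 1)) (m + 1) : ℤ) * 2 ^ (n + 1 - 2 * (m + 1)) * 3 ^ (m + 1))
        + 3 * ((Nat.choose (n - m) m : ℤ) * 2 ^ (n - 2 * m) * 3 ^ m) := by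
  rw [show n + 2 - (m + 1) = (n - m) + 1 by omega, show n + 1 - (m + 1) = n - m by omega,
    show n + 2 - 2 * (m + 1) = n - 2 * m by omega, Nat.choose_succ_succ']
  rcases Nat.lt_or_ge (n - m) (m + 1) with h | h
  · rw [Nat.choose_eq_zero_of_lt h]
    push_cast
    ring
  · rw [show n - 2 * m = (n + 1 - 2 * (m + 1)) + 1 by omega]
    push_cast
    ring

theorem weightedDiagonalSum_add_two (n : ℕ) :
    weightedDiagonalSum (n + 2) = 2 * weightedDiagonalSum (n + 1) + 3 * weightedDiagonalSum n := by
  unfold weightedDiagonalSum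
  -- The last term, of index `n + 2`, is zero; the term of index `0` is `2 ^ (n + 2)`.
  rw [Finset.sum_range_succ, Nat.choose_eq_zero_of_lt (by omega),
    Finset.sum_range_succ' _ (n + 1), Finset.sum_range_succ' _ (n + 1),
    Finset.sum_congr rfl fun m hm =>
      weighted_choose_succ n m (Nat.lt_succ_iff.1 (Finset.mem_range.1 hm)),
    Finset.sum_add_distrib, ← Finset.mul_sum, ← Finset.mul_sum]
  simp only [Nat.choose_zero_right, Nat.mul_zero, Nat.sub_zero, pow_zero]
  push_cast
  ring

theorem four_mul_weightedDiagonalSum (n : ℕ) :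
    4 * weightedDiagonalSum n = 3 ^ (n + 1) + (-1) ^ n := by
  induction n using Nat.twoStepInduction with
  | zero => simp [weightedDiagonalSum]
  | one => simp [weightedDiagonalSum, Finset.sum_range_succ]
  | more n ih₀ ih₁ =>
    rw [weightedDiagonalSum_add_two]
    linear_combination 2 * ih₁ + 3 * ih₀


/-- For every natural number `n`, as an identity of integers,
`4 · ∑_{m=0}^{⌊n/2⌋} C(n-m, m) · 2^{n-2m} · 3^m = 3^{n+1} + (-1)^n`.
(Equivalently, `∑_m C(n-m,m) 2^{n-2m} 3^{m-n} = (3 + (-3)^{-n})/4`, the normalizing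
denominator in the analysis of the accelerated Boltzmann sampler for
`(1/4,1/2,1/4)`-bridges.) -/
theorem four_mul_sum_eq_three_pow_add_neg_one_pow (n : ℕ) :
    4 * ∑ m ∈ Finset.range (n / 2 + 1),
        (Nat.choose (n - m) m : ℤ) * 2 ^ (n - 2 * m) * 3 ^ m
      = 3 ^ (n + 1) + (-1) ^ n := by
  rw [sum_range_half_eq_weightedDiagonalSum, four_mul_weightedDiagonalSum]
end

section
/- Stirling-type limit for the acceptance numerator: With m* = m*(n) = ⌊(n−3)/4⌋, the sequence a_n = ((2n)! · m*! · (n−m*)!) / (3^{n−m*} · (n!)^3) converges to √(3/8) as n → ∞. -/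
/-!
Write `m = ⌊(n-3)/4⌋`, `k = n - m`, and `N! = s_N · √(2N) · (N/e)^N`, where `s_N` is Mathlib's
`Stirling.stirlingSeq`, which tends to `√π`. The powers of `e` cancel because `2n + m + k = 3n`,
and the quotient becomes the product of three factors (`acceptance_quotient_eq`):

* `s_{2n} s_m s_k / s_n³`, which tends to `1`;
* `√(2 (m/n) (k/n))`, which tends to `√(2 · 1/4 · 3/4) = √(3/8)`;
* `(4m/n)^m (4k/(3n))^k`, which tends to `1`.

For the last factor, `1 - 1/x ≤ log x ≤ x - 1` bounds its logarithm between
`(m - n/4) + (k - 3n/4) = 0` and `(n - 4m)²/(3n)`, and `3 ≤ n - 4m ≤ 6` (`power_factor_bounds`).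
-/

open Filter Topology

lemma factorial_eq_stirlingSeq_mul {N : ℕ} (hN : N ≠ 0) :
    (N.factorial : ℝ) = Stirling.stirlingSeq N * (√(2 * N) * (N / Real.exp 1) ^ N) := by
  have : (0 : ℝ) < N := by positivity
  rw [Stirling.stirlingSeq, div_mul_cancel₀]
  positivity

lemma acceptance_quotient_eq {m k n : ℕ} (hm : m ≠ 0) (hk : k ≠ 0) (hn : m + k = n) :
    (((2 * n).factorial : ℝ) * m.factorial * k.factorial) / (3 ^ k * (n.factorial : ℝ) ^ 3) =
      (Stirling.stirlingSeq (2 * n) * Stirling.stirlingSeq m * Stirling.stirlingSeq k /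
          Stirling.stirlingSeq n ^ 3) *
        √(2 * (m / n) * (k / n)) * ((4 * m / n) ^ m * (4 * k / (3 * n)) ^ k) := by
  have hn0 : n ≠ 0 := by omega
  have hm' : (0 : ℝ) < m := by positivity
  have hk' : (0 : ℝ) < k := by positivity
  have hn' : (0 : ℝ) < n := by positivity
  have hs : Stirling.stirlingSeq n ≠ 0 := by
    obtain ⟨j, rfl⟩ := Nat.exists_eq_succ_of_ne_zero hn0
    exact (Stirling.stirlingSeq'_pos j).ne'
  have hsqrt : √(2 * (2 * n : ℝ)) * √(2 * m) * √(2 * k) =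
      √(2 * (m / n) * (k / n)) * √(2 * n) ^ 3 := by
    have h3 : √(2 * n : ℝ) ^ 3 = √((2 * n : ℝ) ^ 3) := by
      refine (Real.sqrt_eq_iff_mul_self_eq (by positivity) (by positivity)).2 ?_ |>.symm
      calc (2 * n : ℝ) ^ 3 = (√(2 * n : ℝ) ^ 2) ^ 3 := by rw [Real.sq_sqrt (by positivity)]
        _ = _ := by ring
    rw [h3, ← Real.sqrt_mul (by positivity), ← Real.sqrt_mul (by positivity),
      ← Real.sqrt_mul (by positivity)]
    congr 1
    field_simp
  have hpow : ((2 * n : ℝ) / Real.exp 1) ^ (2 * n) * (m / Real.exp 1) ^ m * (k / Real.exp 1) ^ k =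
      3 ^ k * ((4 * m / n) ^ m * (4 * k / (3 * n)) ^ k) * ((n / Real.exp 1) ^ n) ^ 3 := by
    have h4 (j : ℕ) : (4 : ℝ) ^ j = 2 ^ (2 * j) := by rw [pow_mul]; norm_num
    subst hn
    simp only [div_pow, mul_pow, h4]
    field_simp
    ring
  rw [factorial_eq_stirlingSeq_mul hm, factorial_eq_stirlingSeq_mul hk,
    factorial_eq_stirlingSeq_mul hn0, factorial_eq_stirlingSeq_mul (N := 2 * n) (by omega)]
  push_cast
  rw [div_eq_iff (by positivity)]
  calc _ = (Stirling.stirlingSeq (2 * n) * Stirling.stirlingSeq m * Stirling.stirlingSeq k) *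
        (√(2 * (2 * n : ℝ)) * √(2 * m) * √(2 * k)) *
        (((2 * n : ℝ) / Real.exp 1) ^ (2 * n) * (m / Real.exp 1) ^ m * (k / Real.exp 1) ^ k) := by
        ring
    _ = _ := by
        rw [hsqrt, hpow]
        generalize (n / Real.exp 1 : ℝ) ^ n = X
        generalize √(2 * (n : ℝ)) = Y
        generalize √(2 * (m / n) * (k / n) : ℝ) = Z
        generalize ((4 * m / n) ^ m * (4 * k / (3 * n)) ^ k : ℝ) = W
        field_simp

/-- With `d = n - 4m`, the base points are `4m/n = 1 - d/n` and `4k/(3n) = 1 + d/(3n)`, so the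
first-order terms of the two logarithms cancel and the upper bound is `exp (d² / (3n))`. -/
lemma power_factor_bounds {m k n : ℕ} (hm : m ≠ 0) (hk : k ≠ 0) (hn : m + k = n) :
    (1 : ℝ) ≤ (4 * m / n) ^ m * (4 * k / (3 * n)) ^ k ∧
      ((4 * m / n) ^ m * (4 * k / (3 * n)) ^ k : ℝ) ≤
        Real.exp (((n : ℝ) - 4 * m) ^ 2 / (3 * n)) := by
  have hn0 : n ≠ 0 := by omega
  have hm' : (0 : ℝ) < m := by positivity
  have hk' : (0 : ℝ) < k := by positivity
  have hn' : (0 : ℝ) < n := by positivity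
  have hkn : (k : ℝ) = n - m := by rw [← hn]; push_cast; ring
  have hx : (0 : ℝ) < 4 * m / n := by positivity
  have hy : (0 : ℝ) < 4 * k / (3 * n) := by positivity
  have hlog : Real.log ((4 * m / n) ^ m * (4 * k / (3 * n)) ^ k) =
      m * Real.log (4 * m / n) + k * Real.log (4 * k / (3 * n)) := by
    rw [Real.log_mul (by positivity) (by positivity), Real.log_pow, Real.log_pow]
  constructor
  · rw [← Real.log_nonneg_iff (by positivity), hlog]
    have h1 := mul_le_mul_of_nonneg_left (Real.one_sub_inv_le_log_of_pos hx) hm'.le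
    have h2 := mul_le_mul_of_nonneg_left (Real.one_sub_inv_le_log_of_pos hy) hk'.le
    have e1 : (m : ℝ) * (1 - (4 * m / n : ℝ)⁻¹) = m - n / 4 := by field_simp
    have e2 : (k : ℝ) * (1 - (4 * k / (3 * n) : ℝ)⁻¹) = k - 3 * n / 4 := by field_simp
    linarith
  · rw [← Real.log_le_iff_le_exp (by positivity), hlog]
    have h1 := mul_le_mul_of_nonneg_left (Real.log_le_sub_one_of_pos hx) hm'.le
    have h2 := mul_le_mul_of_nonneg_left (Real.log_le_sub_one_of_pos hy) hk'.le
    have e : (m : ℝ) * (4 * m / n - 1) + k * (4 * k / (3 * n) - 1) =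
        ((n : ℝ) - 4 * m) ^ 2 / (3 * n) := by
      rw [hkn]; field_simp; ring
    linarith

lemma tendsto_mstar_div :
    Tendsto (fun n : ℕ => (((n - 3) / 4 : ℕ) : ℝ) / n) atTop (𝓝 (1 / 4)) := by
  have hlow : Tendsto (fun n : ℕ => 1 / 4 - 6 / 4 / (n : ℝ)) atTop (𝓝 (1 / 4)) := by
    simpa only [sub_zero] using
      (tendsto_const_div_atTop_nhds_zero_nat (6 / 4 : ℝ)).const_sub (1 / 4)
  refine tendsto_of_tendsto_of_tendsto_of_le_of_le' hlow tendsto_const_nhds ?_ ?_ <;>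
    filter_upwards [eventually_ge_atTop 7] with n hn
  all_goals
    have hn' : (0 : ℝ) < n := by positivity
  · have h : (n : ℝ) ≤ 4 * ((n - 3) / 4 : ℕ) + 6 := by
      have : n ≤ 4 * ((n - 3) / 4) + 6 := by omega
      exact_mod_cast this
    rw [le_div_iff₀ hn']
    field_simp
    linarith
  · have h : 4 * (((n - 3) / 4 : ℕ) : ℝ) ≤ n := by
      have : 4 * ((n - 3) / 4) ≤ n := by omega
      exact_mod_cast this
    rw [div_le_iff₀ hn']
    linarith

/-- **Stirling-type limit for the acceptance numerator.** With `m* = ⌊(n-3)/4⌋`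
(natural truncated subtraction for `n < 3`), the sequence
`a_n = (2n)! · m*! · (n-m*)! / (3^{n-m*} · (n!)³)` converges to `√(3/8)`. -/
theorem acceptance_numerator_limit :
    Filter.Tendsto
      (fun n : ℕ =>
        (((2 * n).factorial : ℝ) * ((n - 3) / 4).factorial *
            (n - (n - 3) / 4).factorial) /
          (3 ^ (n - (n - 3) / 4) * (n.factorial : ℝ) ^ 3))
      Filter.atTop (nhds (Real.sqrt (3 / 8))) := by
  have hS := Stirling.tendsto_stirlingSeq_sqrt_pi
  have t2 : Tendsto (fun n : ℕ => 2 * n) atTop atTop :=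
    tendsto_atTop_mono (fun n => by simp only [id]; omega) tendsto_id
  have tm : Tendsto (fun n : ℕ => (n - 3) / 4) atTop atTop :=
    tendsto_atTop.2 fun b => by
      filter_upwards [eventually_ge_atTop (4 * b + 3)] with n hn
      omega
  have tk : Tendsto (fun n : ℕ => n - (n - 3) / 4) atTop atTop :=
    tendsto_atTop.2 fun b => by
      filter_upwards [eventually_ge_atTop (4 * b + 3)] with n hn
      omega
  have hA := (((hS.comp t2).mul (hS.comp tm)).mul (hS.comp tk)).div (hS.pow 3)
    (by positivity)
  have hB : Tendsto (fun n : ℕ => √(2 * ((((n - 3) / 4 : ℕ) : ℝ) / n) *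
      (((n - (n - 3) / 4 : ℕ) : ℝ) / n))) atTop (𝓝 √(3 / 8)) := by
    have hk : Tendsto (fun n : ℕ => (((n - (n - 3) / 4 : ℕ) : ℝ) / n)) atTop (𝓝 (1 - 1 / 4)) := by
      refine (tendsto_mstar_div.const_sub 1).congr' ?_
      filter_upwards [eventually_ge_atTop 7] with n hn
      have hn' : (0 : ℝ) < n := by positivity
      rw [Nat.cast_sub (by omega)]
      field_simp
    have := ((tendsto_mstar_div.const_mul 2).mul hk).sqrt
    norm_num at this ⊢
    exact this
  have hC : Tendsto (fun n : ℕ => ((4 * (((n - 3) / 4 : ℕ) : ℝ) / n) ^ ((n - 3) / 4) *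
      (4 * ((n - (n - 3) / 4 : ℕ) : ℝ) / (3 * n)) ^ (n - (n - 3) / 4))) atTop (𝓝 1) := by
    have hup : Tendsto (fun n : ℕ => Real.exp (12 / (n : ℝ))) atTop (𝓝 1) := by
      simpa using (tendsto_const_div_atTop_nhds_zero_nat (12 : ℝ)).rexp
    refine tendsto_of_tendsto_of_tendsto_of_le_of_le' tendsto_const_nhds hup ?_ ?_ <;>
      filter_upwards [eventually_ge_atTop 7] with n hn
    · exact (power_factor_bounds (by omega) (by omega) (by omega)).1
    · refine (power_factor_bounds (by omega) (by omega) (by omega)).2.trans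
        (Real.exp_le_exp.2 ?_)
      have hn' : (0 : ℝ) < n := by positivity
      have h1 : (n : ℝ) ≤ 4 * ((n - 3) / 4 : ℕ) + 6 := by
        have : n ≤ 4 * ((n - 3) / 4) + 6 := by omega
        exact_mod_cast this
      have h2 : 4 * (((n - 3) / 4 : ℕ) : ℝ) ≤ n := by
        have : 4 * ((n - 3) / 4) ≤ n := by omega
        exact_mod_cast this
      rw [div_le_div_iff₀ (by positivity) hn']
      have : ((n : ℝ) - 4 * ((n - 3) / 4 : ℕ)) ^ 2 ≤ 36 := by nlinarith
      nlinarith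
  have hlim : √Real.pi * √Real.pi * √Real.pi / √Real.pi ^ 3 * √(3 / 8) * 1 = √(3 / 8) := by
    have : √Real.pi ≠ 0 := by positivity
    field_simp
  rw [← hlim]
  refine ((hA.mul hB).mul hC).congr' ?_
  filter_upwards [eventually_ge_atTop 7] with n hn
  exact (acceptance_quotient_eq (m := (n - 3) / 4) (k := n - (n - 3) / 4) (n := n)
    (by omega) (by omega) (by omega)).symm
end

section
/- Limiting acceptance rate of the accelerated Boltzmann sampler for (1/4,1/2,1/4)-bridges: With m* = m*(n) = ⌊(n−3)/4⌋, the sequence E_n = (4 · (2n)! · m*! · (n−m*)!) / (3^{n−m*} · (n!)^3 · (3 + (−3)^{−n})) converges to √(2/3) as n → ∞ (so that on average √(8/3) tries suffice to accept a run of the algorithm). -/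
/-!
Write `m = ⌊(n-3)/4⌋` and `k = n - m`. Substituting `j! = s_j √(2j) (j/e)^j`, where `s_j → √π` is
Mathlib's `Stirling.stirlingSeq`, factors `E_n` exactly (`acceptance_factor`) as
`4 / (3 + (-3)^{-n}) · (s_{2n} s_m s_k / s_n³) · √(2 (m/n) (k/n)) · (4m/n)^m (4k/(3n))^k`.
The first three factors tend to `4/3`, `1` and `√(3/8)`, whose product is `√(2/3)`.

The last factor is the exponential of `n` times the relative entropy of `(m/n, k/n)` with respect
to `(1/4, 3/4)`. Hence it is at least `1`, and by `log t ≤ t - 1` it is at most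
`exp ((n - 4m)² / (3n))`, which tends to `1` because `n - 4m ≤ 6` (`entropy_bounds`).
-/

open Filter Topology Stirling

lemma factorial_eq_stirlingSeq (n : ℕ) (hn : 0 < n) :
    (n.factorial : ℝ) = stirlingSeq n * (√(2 * n) * (n / Real.exp 1) ^ n) := by
  have : (0 : ℝ) < n := by exact_mod_cast hn
  unfold stirlingSeq
  field_simp

lemma sqrt_factor (n m k : ℝ) (hn : 0 < n) (hm : 0 < m) (hk : 0 < k) :
    √(2 * (2 * n)) * √(2 * m) * √(2 * k) = √(2 * (m / n) * (k / n)) * √(2 * n) ^ 3 := by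
  have h3 : √(2 * n) ^ 3 = √((2 * n) ^ 3) := by
    rw [eq_comm, Real.sqrt_eq_iff_mul_self_eq (by positivity) (by positivity), eq_comm]
    have := Real.sq_sqrt (show 0 ≤ 2 * n by positivity)
    calc √(2 * n) ^ 3 * √(2 * n) ^ 3 = (√(2 * n) ^ 2) ^ 3 := by ring
      _ = _ := by rw [this]
  rw [h3, ← Real.sqrt_mul (by positivity), ← Real.sqrt_mul (by positivity),
    ← Real.sqrt_mul (by positivity)]
  congr 1
  field_simp

lemma pow_factor (n m k : ℕ) (hn : 0 < n) (h : n = m + k) (e : ℝ) (he : 0 < e) :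
    (2 * (n : ℝ) / e) ^ (2 * n) * ((m : ℝ) / e) ^ m * ((k : ℝ) / e) ^ k =
      3 ^ k * (((n : ℝ) / e) ^ n) ^ 3 *
        ((4 * (m : ℝ) / n) ^ m * (4 * (k : ℝ) / (3 * n)) ^ k) := by
  have hn' : (0 : ℝ) < n := by exact_mod_cast hn
  -- All bases are expressed through `t = n / e`, `x = 4m/n` and `y = 4k/(3n)`.
  have h1 : (m : ℝ) / e = (n / e) * (4 * m / n) / 4 := by field_simp
  have h2 : (k : ℝ) / e = (n / e) * (4 * k / (3 * n)) * 3 / 4 := by field_simp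
  have h3 : (2 * (n : ℝ) / e) ^ (2 * n) = 4 ^ n * ((n / e) ^ n) ^ 2 := by
    rw [pow_mul, ← pow_mul (_ / e) n 2, mul_comm n 2, pow_mul _ 2 n, ← mul_pow]
    congr 1
    ring
  rw [h3, h1, h2]
  generalize 4 * (m : ℝ) / n = x
  generalize 4 * (k : ℝ) / (3 * n) = y
  generalize (n : ℝ) / e = t
  subst h
  simp only [div_pow, mul_pow, pow_add]
  field_simp

lemma acceptance_factor (n m k : ℕ) (hm : 0 < m) (hk : 0 < k) (h : n = m + k) (D : ℝ) :
    (4 * ((2 * n).factorial : ℝ) * m.factorial * k.factorial) /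
        (3 ^ k * (n.factorial : ℝ) ^ 3 * D) =
      4 / D * (stirlingSeq (2 * n) * stirlingSeq m * stirlingSeq k / stirlingSeq n ^ 3) *
        √(2 * ((m : ℝ) / n) * ((k : ℝ) / n)) *
        ((4 * (m : ℝ) / n) ^ m * (4 * (k : ℝ) / (3 * n)) ^ k) := by
  have hn : 0 < n := by omega
  have hn' : (0 : ℝ) < n := by exact_mod_cast hn
  have hm' : (0 : ℝ) < m := by exact_mod_cast hm
  have hk' : (0 : ℝ) < k := by exact_mod_cast hk
  have hS := sqrt_factor n m k hn' hm' hk'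
  have hP := pow_factor n m k hn h (Real.exp 1) (Real.exp_pos 1)
  rw [factorial_eq_stirlingSeq n hn, factorial_eq_stirlingSeq m hm, factorial_eq_stirlingSeq k hk,
    factorial_eq_stirlingSeq (2 * n) (by omega)]
  push_cast
  have hA : √(2 * (n : ℝ)) ≠ 0 := by positivity
  have hB : ((n : ℝ) / Real.exp 1) ^ n ≠ 0 := by positivity
  generalize (4 * (m : ℝ) / n) ^ m * (4 * (k : ℝ) / (3 * n)) ^ k = X at *
  generalize √(2 * ((m : ℝ) / n) * ((k : ℝ) / n)) = Y at *
  generalize √(2 * (n : ℝ)) = A at *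
  generalize ((n : ℝ) / Real.exp 1) ^ n = B at *
  generalize stirlingSeq n = s
  calc _ = 4 * (stirlingSeq (2 * n) * stirlingSeq m * stirlingSeq k) *
          (√(2 * (2 * (n : ℝ))) * √(2 * m) * √(2 * k)) *
          ((2 * (n : ℝ) / Real.exp 1) ^ (2 * n) * ((m : ℝ) / Real.exp 1) ^ m *
            ((k : ℝ) / Real.exp 1) ^ k) / (3 ^ k * (s * (A * B)) ^ 3 * D) := by ring
    _ = 4 * (stirlingSeq (2 * n) * stirlingSeq m * stirlingSeq k) *
          (Y * A ^ 3) * (3 ^ k * B ^ 3 * X) / (3 ^ k * (s * (A * B)) ^ 3 * D) := by rw [hS, hP]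
    _ = _ := by field_simp

/-- The lower bound is nonnegativity of relative entropy; the upper bound is
`log t ≤ t - 1` applied to each base. -/
lemma entropy_bounds (n m k : ℕ) (hm : 0 < m) (hk : 0 < k) (h : n = m + k) :
    1 ≤ (4 * (m : ℝ) / n) ^ m * (4 * (k : ℝ) / (3 * n)) ^ k ∧
      (4 * (m : ℝ) / n) ^ m * (4 * (k : ℝ) / (3 * n)) ^ k ≤
        Real.exp (((n : ℝ) - 4 * m) ^ 2 / (3 * n)) := by
  have hm' : (0 : ℝ) < m := by exact_mod_cast hm
  have hk' : (0 : ℝ) < k := by exact_mod_cast hk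
  have hn' : (n : ℝ) = m + k := by exact_mod_cast h
  have hn0 : (0 : ℝ) < n := by linarith
  have hx : (0 : ℝ) < 4 * m / n := by positivity
  have hy : (0 : ℝ) < 4 * k / (3 * n) := by positivity
  have key : (4 * (m : ℝ) / n) ^ m * (4 * (k : ℝ) / (3 * n)) ^ k =
      Real.exp (m * Real.log (4 * m / n) + k * Real.log (4 * k / (3 * n))) := by
    rw [Real.exp_add, Real.exp_nat_mul, Real.exp_nat_mul, Real.exp_log hx, Real.exp_log hy]
  rw [key]
  constructor
  · apply Real.one_le_exp
    have h1 := mul_le_mul_of_nonneg_left (Real.one_sub_inv_le_log_of_pos hx) hm'.le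
    have h2 := mul_le_mul_of_nonneg_left (Real.one_sub_inv_le_log_of_pos hy) hk'.le
    have e1 : (m : ℝ) * (1 - (4 * (m : ℝ) / n)⁻¹) = m - n / 4 := by field_simp
    have e2 : (k : ℝ) * (1 - (4 * (k : ℝ) / (3 * n))⁻¹) = k - 3 * n / 4 := by field_simp
    linarith
  · apply Real.exp_le_exp.mpr
    have h1 := mul_le_mul_of_nonneg_left (Real.log_le_sub_one_of_pos hx) hm'.le
    have h2 := mul_le_mul_of_nonneg_left (Real.log_le_sub_one_of_pos hy) hk'.le
    have e : (m : ℝ) * (4 * (m : ℝ) / n - 1) + k * (4 * (k : ℝ) / (3 * n) - 1) =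
        ((n : ℝ) - 4 * m) ^ 2 / (3 * n) := by
      have : (k : ℝ) = n - m := by linarith
      rw [this]
      field_simp
      ring
    linarith

/-- **Limiting acceptance rate of the accelerated Boltzmann sampler for
`(1/4,1/2,1/4)`-bridges.** With `m* = ⌊(n-3)/4⌋` (natural truncated subtraction for
`n < 3`), the sequence
`E_n = 4 · (2n)! · m*! · (n-m*)! / (3^{n-m*} · (n!)³ · (3 + (-3)^{-n}))`
converges to `√(2/3)` (so on average `√(8/3)` tries suffice to accept a run). -/
theorem acceptance_rate_limit :
    Filter.Tendsto
      (fun n : ℕ =>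
        (4 * ((2 * n).factorial : ℝ) * ((n - 3) / 4).factorial *
            (n - (n - 3) / 4).factorial) /
          (3 ^ (n - (n - 3) / 4) * (n.factorial : ℝ) ^ 3 *
            (3 + (-3 : ℝ) ^ (-(n : ℤ)))))
      Filter.atTop (nhds (Real.sqrt (2 / 3))) := by
  have hM : Tendsto (fun n : ℕ => (n - 3) / 4) atTop atTop :=
    tendsto_atTop.mpr fun b => (eventually_ge_atTop (4 * b + 3)).mono fun n hn => by omega
  have hK : Tendsto (fun n : ℕ => n - (n - 3) / 4) atTop atTop :=
    tendsto_atTop.mpr fun b => (eventually_ge_atTop (2 * b)).mono fun n hn => by omega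
  have h2 : Tendsto (fun n : ℕ => 2 * n) atTop atTop :=
    tendsto_atTop.mpr fun b => (eventually_ge_atTop b).mono fun n hn => by omega
  have hr : ∀ n : ℕ, 3 ≤ n → (3 : ℝ) ≤ n - 4 * ((n - 3) / 4 : ℕ) ∧
      (n : ℝ) - 4 * ((n - 3) / 4 : ℕ) ≤ 6 := by
    intro n hn
    have a : 4 * ((n - 3) / 4) + 3 ≤ n := by omega
    have b : n ≤ 4 * ((n - 3) / 4) + 6 := by omega
    have a' : (4 : ℝ) * ((n - 3) / 4 : ℕ) + 3 ≤ n := by exact_mod_cast a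
    have b' : (n : ℝ) ≤ 4 * ((n - 3) / 4 : ℕ) + 6 := by exact_mod_cast b
    constructor <;> linarith
  have hc : ∀ c : ℝ, Tendsto (fun n : ℕ => c / (n : ℝ)) atTop (𝓝 0) :=
    fun c => tendsto_const_div_atTop_nhds_zero_nat c
  have hmn : Tendsto (fun n : ℕ => (((n - 3) / 4 : ℕ) : ℝ) / n) atTop (𝓝 (1 / 4)) := by
    have lo : Tendsto (fun n : ℕ => 1 / 4 - (6 / 4) / (n : ℝ)) atTop (𝓝 (1 / 4)) := by
      simpa only [sub_zero] using (hc (6 / 4)).const_sub (1 / 4)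
    refine tendsto_of_tendsto_of_tendsto_of_le_of_le' lo tendsto_const_nhds ?_ ?_ <;>
    · filter_upwards [eventually_ge_atTop 3] with n hn
      have hn0 : (0 : ℝ) < n := by exact_mod_cast (by omega : 0 < n)
      obtain ⟨a, b⟩ := hr n hn
      field_simp
      linarith
  have hkn : Tendsto (fun n : ℕ => ((n - (n - 3) / 4 : ℕ) : ℝ) / n) atTop (𝓝 (3 / 4)) := by
    have := hmn.const_sub 1
    norm_num only at this
    refine this.congr' ?_
    filter_upwards [eventually_ge_atTop 3] with n hn
    have hn0 : (0 : ℝ) < n := by exact_mod_cast (by omega : 0 < n)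
    rw [Nat.cast_sub (by omega)]
    field_simp
  have hX : Tendsto (fun n : ℕ => (4 * (((n - 3) / 4 : ℕ) : ℝ) / n) ^ ((n - 3) / 4) *
      (4 * ((n - (n - 3) / 4 : ℕ) : ℝ) / (3 * n)) ^ (n - (n - 3) / 4)) atTop (𝓝 1) := by
    have hi : Tendsto (fun n : ℕ => Real.exp (12 / (n : ℝ))) atTop (𝓝 1) := by
      simpa [Function.comp_def] using (Real.continuous_exp.tendsto 0).comp (hc 12)
    refine tendsto_of_tendsto_of_tendsto_of_le_of_le' tendsto_const_nhds hi ?_ ?_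
    · filter_upwards [eventually_ge_atTop 7] with n hn
      exact (entropy_bounds n _ _ (by omega) (by omega) (by omega)).1
    · filter_upwards [eventually_ge_atTop 7] with n hn
      refine (entropy_bounds n _ _ (by omega) (by omega) (by omega)).2.trans ?_
      have hn0 : (0 : ℝ) < n := by exact_mod_cast (by omega : 0 < n)
      obtain ⟨a, b⟩ := hr n (by omega)
      apply Real.exp_le_exp.mpr
      rw [div_le_div_iff₀ (by positivity) hn0]
      have hsq : ((n : ℝ) - 4 * ((n - 3) / 4 : ℕ)) ^ 2 ≤ 36 := by nlinarith
      nlinarith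
  have hD : Tendsto (fun n : ℕ => 4 / (3 + (-3 : ℝ) ^ (-(n : ℤ)))) atTop (𝓝 (4 / 3)) := by
    have : Tendsto (fun n : ℕ => (-3 : ℝ) ^ (-(n : ℤ))) atTop (𝓝 0) := by
      have h := tendsto_pow_atTop_nhds_zero_of_abs_lt_one (r := (-3 : ℝ)⁻¹)
        (by rw [abs_lt]; norm_num)
      refine h.congr fun n => ?_
      rw [zpow_neg, zpow_natCast, inv_pow]
    have h := this.const_add 3
    rw [add_zero] at h
    exact tendsto_const_nhds.div h (by norm_num)
  have s := tendsto_stirlingSeq_sqrt_pi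
  have hpi : √Real.pi ≠ 0 := by positivity
  have hS := (((s.comp h2).mul (s.comp hM)).mul (s.comp hK)).div (s.pow 3) (pow_ne_zero 3 hpi)
  have hQ := ((hmn.const_mul 2).mul hkn).sqrt
  have hAll := ((hD.mul hS).mul hQ).mul hX
  have hval : 4 / 3 * (√Real.pi * √Real.pi * √Real.pi / √Real.pi ^ 3) *
      √(2 * (1 / 4) * (3 / 4)) * 1 = √(2 / 3) := by
    have e1 : √Real.pi * √Real.pi * √Real.pi / √Real.pi ^ 3 = 1 := by field_simp
    rw [e1, mul_one, mul_one, eq_comm, Real.sqrt_eq_iff_mul_self_eq (by positivity) (by positivity)]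
    have := Real.mul_self_sqrt (show (0 : ℝ) ≤ 2 * (1 / 4) * (3 / 4) by norm_num)
    linear_combination -(16 / 9) * this
  rw [hval] at hAll
  refine hAll.congr' ?_
  filter_upwards [eventually_ge_atTop 7] with n hn
  exact (acceptance_factor n ((n - 3) / 4) (n - (n - 3) / 4) (by omega) (by omega) (by omega)
    _).symm
end

section
/- Euler–Maclaurin bounds for digamma differences: For every real x > 0 and every natural number N ≥ 1, the sum S = ∑_{k=0}^{N−1} 1/(x+k) (which equals ψ(x+N) − ψ(x) for the digamma function ψ) satisfies ln((x+N−1)/x) + (2x+N−1)/(2x(x+N−1)) ≤ S ≤ ln((x+N−1)/x) + (2x+N−1)/(2x(x+N−1)) + (N−1)(2x+N−1)/(6x²(x+N−1)²). -/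
/-!
Put `m = N - 1` and `y = x + m`. The trapezoidal term is `1/(2x) + 1/(2y)` and the error term is
`(1/x² - 1/y²)/6`, so both bounds telescope over unit steps: it suffices to show, for `a > 0` and
`b = a + 1`, that
`log (b/a) ≤ (1/a + 1/b)/2 ≤ log (b/a) + (1/a² - 1/b²)/6`.
With `t = b/a`, the first inequality is `log t ≤ (t - 1/t)/2`, i.e. `s ≤ sinh s` at `s = log t`.
The second follows from `2/(a + b) ≤ log (b/a)` together with `3ab ≤ (a + b)²`.
-/

/-- The trapezoidal rule overestimates the integral of `1/t` over `[a, a + 1]`. -/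
lemma log_step_le_trapezoid (a : ℝ) (ha : 0 < a) :
    Real.log (a + 1) - Real.log a ≤ 1 / (2 * a) + 1 / (2 * (a + 1)) := by
  have hb : 0 < a + 1 := by linarith
  have ht : 1 ≤ (a + 1) / a := by
    rw [le_div_iff₀ ha]
    linarith
  have h := Real.self_le_sinh_iff.2 (Real.log_nonneg ht)
  rw [Real.sinh_log (by positivity), Real.log_div hb.ne' ha.ne'] at h
  refine h.trans (le_of_eq ?_)
  field_simp
  ring

/-- The error of the trapezoidal rule for `1/t` over `[a, a + 1]` is at most
`(1/a² - 1/(a + 1)²)/6`. -/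
lemma trapezoid_le_log_step (a : ℝ) (ha : 0 < a) :
    1 / (2 * a) + 1 / (2 * (a + 1)) ≤
      Real.log (a + 1) - Real.log a + (1 / a ^ 2 - 1 / (a + 1) ^ 2) / 6 := by
  have hb : 0 < a + 1 := by linarith
  have h := Real.le_log_one_add_of_nonneg (x := 1 / a) (by positivity)
  have e : 1 + 1 / a = (a + 1) / a := by field_simp
  rw [e, Real.log_div hb.ne' ha.ne'] at h
  -- The slack left after replacing the logarithm by `2/(2a + 1)`.
  have key : 2 * (1 / a) / (1 / a + 2) + (1 / a ^ 2 - 1 / (a + 1) ^ 2) / 6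
      - (1 / (2 * a) + 1 / (2 * (a + 1)))
      = (a ^ 2 + a + 1) / (6 * a ^ 2 * (a + 1) ^ 2 * (2 * a + 1)) := by
    field_simp
    ring
  have hpos : 0 ≤ (a ^ 2 + a + 1) / (6 * a ^ 2 * (a + 1) ^ 2 * (2 * a + 1)) := by positivity
  linarith

/-- The bounds in telescoping form, for the sum with `m + 1` terms. -/
lemma harmonic_sum_bounds (x : ℝ) (hx : 0 < x) (m : ℕ) :
    Real.log (x + m) - Real.log x + (1 / (2 * x) + 1 / (2 * (x + m)))
        ≤ ∑ k ∈ Finset.range (m + 1), 1 / (x + k)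
    ∧ ∑ k ∈ Finset.range (m + 1), 1 / (x + k)
        ≤ Real.log (x + m) - Real.log x + (1 / (2 * x) + 1 / (2 * (x + m)))
          + (1 / x ^ 2 - 1 / (x + m) ^ 2) / 6 := by
  induction m with
  | zero =>
    have e : 1 / x = 1 / (2 * x) + 1 / (2 * x) := by
      field_simp
      norm_num
    constructor <;> simp only [zero_add, Finset.sum_range_one, Nat.cast_zero, add_zero] <;> linarith
  | succ m ih =>
    obtain ⟨h1, h2⟩ := ih
    have ha : 0 < x + m := by positivity
    have l := log_step_le_trapezoid _ ha
    have u := trapezoid_le_log_step _ ha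
    have e : 1 / (x + m + 1) = 1 / (2 * (x + m + 1)) + 1 / (2 * (x + m + 1)) := by
      field_simp
      norm_num
    rw [Finset.sum_range_succ]
    push_cast
    rw [← add_assoc x (m : ℝ) 1]
    constructor <;> linarith


/-- **Euler–Maclaurin bounds for digamma differences.** For every real `x > 0` and
`N ≥ 1`, the sum `S = ∑_{k=0}^{N-1} 1/(x+k) = ψ(x+N) - ψ(x)` satisfies
`ln((x+N-1)/x) + (2x+N-1)/(2x(x+N-1)) ≤ S`
and `S ≤ ln((x+N-1)/x) + (2x+N-1)/(2x(x+N-1)) + (N-1)(2x+N-1)/(6x²(x+N-1)²)`. -/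
theorem euler_maclaurin_digamma_bounds (x : ℝ) (hx : 0 < x) (N : ℕ) (hN : 1 ≤ N) :
    Real.log ((x + N - 1) / x) + (2 * x + N - 1) / (2 * x * (x + N - 1))
        ≤ ∑ k ∈ Finset.range N, 1 / (x + k)
    ∧ ∑ k ∈ Finset.range N, 1 / (x + k)
        ≤ Real.log ((x + N - 1) / x) + (2 * x + N - 1) / (2 * x * (x + N - 1))
          + ((N : ℝ) - 1) * (2 * x + N - 1) / (6 * x ^ 2 * (x + N - 1) ^ 2) := by
  obtain ⟨m, rfl⟩ : ∃ m, N = m + 1 := ⟨N - 1, by omega⟩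
  have ha : 0 < x + m := by positivity
  have h := harmonic_sum_bounds x hx m
  have e1 : x + ((m + 1 : ℕ) : ℝ) - 1 = x + m := by
    push_cast
    ring
  have e2 : 2 * x + ((m + 1 : ℕ) : ℝ) - 1 = 2 * x + m := by
    push_cast
    ring
  have e3 : ((m + 1 : ℕ) : ℝ) - 1 = m := by
    push_cast
    ring
  have e4 : (2 * x + m) / (2 * x * (x + m)) = 1 / (2 * x) + 1 / (2 * (x + m)) := by
    field_simp
    ring
  have e5 : (m : ℝ) * (2 * x + m) / (6 * x ^ 2 * (x + m) ^ 2)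
      = (1 / x ^ 2 - 1 / (x + m) ^ 2) / 6 := by
    field_simp
    ring
  rw [e1, e2, e3, e4, e5, Real.log_div ha.ne' hx.ne']
  exact h
end

section
/- Rational bounds for the function c(x) = −ln(cosh√x) + √x·tanh(√x): for every real x ≥ 0, 3x(12+x)/((6+x)(12+5x)) ≤ −ln(cosh√x) + √x·tanh(√x) ≤ 3x(6+x)/(4(3+x)²). -/
/-!
Write `x = s²`. The derivative in `s` of `c = -log (cosh s) + s * tanh s` is `s / cosh² s`, and all
three functions vanish at `s = 0`, so both bounds follow by comparing derivatives on `[0, ∞)`.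

* The upper bound reduces to `(1 + x/3)³ ≤ cosh² s`, which holds because the Taylor polynomial
  `1 + x + x²/3 + 2x³/45` of `cosh² s` already dominates the left-hand side (`cosh_sq_lower`).
* The lower bound reduces to `108 (48 + 8x - x²) cosh² s ≤ (72 + 42x + 5x²)²`. In the power series
  in `x` of the right side minus the left side every coefficient is nonnegative (`cosh_sq_upper`).

Both inequalities are read off from `cosh² s = (1 + cosh 2s) / 2` and the power series of `cosh`.
-/

/-- The power series of `cosh (2s)` with its first `m` terms removed. -/
lemma hasSum_cosh_tail (s : ℝ) (m : ℕ) :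
    HasSum (fun k : ℕ => (4 * s ^ 2) ^ (k + m) / ((2 * (k + m)).factorial : ℝ))
      (Real.cosh (2 * s) - ∑ i ∈ Finset.range m, (4 * s ^ 2) ^ i / ((2 * i).factorial : ℝ)) := by
  have h := Real.hasSum_cosh (2 * s)
  have h' : HasSum (fun k : ℕ => (4 * s ^ 2) ^ k / ((2 * k).factorial : ℝ))
      (Real.cosh (2 * s)) := by
    convert h using 3 with k
    rw [pow_mul]
    congr 1
    ring
  exact (hasSum_nat_add_iff' m).mpr h'

lemma cosh_sq_eq_half (s : ℝ) : Real.cosh s ^ 2 = (1 + Real.cosh (2 * s)) / 2 := by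
  rw [Real.cosh_two_mul]
  linarith [Real.cosh_sq s]

lemma cosh_sq_lower (s : ℝ) : (3 + s ^ 2) ^ 3 ≤ 27 * Real.cosh s ^ 2 := by
  have h := (hasSum_cosh_tail s 4).nonneg (fun k => by positivity)
  simp only [Finset.sum_range_succ, Finset.sum_range_zero, Nat.factorial] at h
  norm_num at h
  rw [cosh_sq_eq_half]
  nlinarith [pow_nonneg (sq_nonneg s) 3]

/-- Comparison of the coefficients of `x ^ (k + 5)`, with `y = 4x`. -/
lemma coeff_le (y : ℝ) (hy : 0 ≤ y) (k : ℕ) :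
    216 * y * (y ^ (k + 4) / ((2 * (k + 4)).factorial : ℝ))
        + 5184 * (y ^ (k + 5) / ((2 * (k + 5)).factorial : ℝ))
      ≤ 27 / 4 * y ^ 2 * (y ^ (k + 3) / ((2 * (k + 3)).factorial : ℝ)) := by
  set F : ℝ := ((2 * (k + 3)).factorial : ℝ) with hF
  have hF0 : 0 < F := by positivity
  have h4 : ((2 * (k + 4)).factorial : ℝ) = (2 * k + 8) * (2 * k + 7) * F := by
    rw [show 2 * (k + 4) = 2 * (k + 3) + 1 + 1 by ring, Nat.factorial_succ, Nat.factorial_succ, hF]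
    push_cast
    ring
  have h5 : ((2 * (k + 5)).factorial : ℝ)
      = (2 * k + 10) * (2 * k + 9) * ((2 * k + 8) * (2 * k + 7) * F) := by
    rw [← h4, show 2 * (k + 5) = 2 * (k + 4) + 1 + 1 by ring, Nat.factorial_succ,
      Nat.factorial_succ]
    push_cast
    ring
  rw [h4, h5]
  have hk : (0 : ℝ) ≤ k := k.cast_nonneg
  have ha : (216 : ℝ) / ((2 * k + 8) * (2 * k + 7)) ≤ 216 / 56 := by
    gcongr
    nlinarith
  have hb : (5184 : ℝ) / ((2 * k + 10) * (2 * k + 9) * ((2 * k + 8) * (2 * k + 7)))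
      ≤ 5184 / (90 * 56) := by
    gcongr <;> nlinarith
  have hc : (0 : ℝ) ≤ y ^ (k + 5) / F := by positivity
  calc _ = (216 / ((2 * k + 8) * (2 * k + 7))
        + 5184 / ((2 * k + 10) * (2 * k + 9) * ((2 * k + 8) * (2 * k + 7)))) * (y ^ (k + 5) / F) := by
        field_simp
        ring
    _ ≤ 27 / 4 * (y ^ (k + 5) / F) := by
        gcongr
        linarith
    _ = _ := by ring

lemma cosh_sq_upper (s : ℝ) :
    108 * (48 + 8 * s ^ 2 - (s ^ 2) ^ 2) * Real.cosh s ^ 2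
      ≤ (72 + 42 * s ^ 2 + 5 * (s ^ 2) ^ 2) ^ 2 := by
  have h := hasSum_le (coeff_le (4 * s ^ 2) (by positivity))
    (((hasSum_cosh_tail s 4).mul_left (216 * (4 * s ^ 2))).add
      ((hasSum_cosh_tail s 5).mul_left 5184))
    ((hasSum_cosh_tail s 3).mul_left (27 / 4 * (4 * s ^ 2) ^ 2))
  simp only [Finset.sum_range_succ, Finset.sum_range_zero, Nat.factorial] at h
  norm_num at h
  rw [cosh_sq_eq_half]
  nlinarith [pow_nonneg (sq_nonneg s) 3, pow_nonneg (sq_nonneg s) 4]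

lemma hasDerivAt_logCosh (s : ℝ) :
    HasDerivAt (fun t => -Real.log (Real.cosh t) + t * Real.tanh t) (s / Real.cosh s ^ 2) s := by
  have hc : Real.cosh s ≠ 0 := (Real.cosh_pos s).ne'
  have ht : HasDerivAt Real.tanh (1 / Real.cosh s ^ 2) s := by
    have h := (Real.hasDerivAt_sinh s).div (Real.hasDerivAt_cosh s) hc
    have e : Real.tanh = Real.sinh / Real.cosh := by
      ext t
      simp [Real.tanh_eq_sinh_div_cosh]
    rw [e]
    convert! h using 2
    linarith [Real.cosh_sq s]
  convert! ((Real.hasDerivAt_cosh s).log hc).neg.add ((hasDerivAt_id s).mul ht) using 1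
  rw [Real.tanh_eq_sinh_div_cosh]
  simp only [id]
  field_simp
  ring

/-- A function vanishing at `0` with nonnegative derivative on `[0, ∞)` is nonnegative there. -/
lemma nonneg_of_hasDerivAt {f f' : ℝ → ℝ} (h0 : f 0 = 0) (hf : ∀ s, HasDerivAt f (f' s) s)
    (hf' : ∀ s, 0 ≤ s → 0 ≤ f' s) {s : ℝ} (hs : 0 ≤ s) : 0 ≤ f s := by
  have hm : MonotoneOn f (Set.Ici 0) := by
    refine monotoneOn_of_deriv_nonneg (convex_Ici 0)
      (fun t _ => (hf t).continuousAt.continuousWithinAt)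
      (fun t _ => (hf t).differentiableAt.differentiableWithinAt) (fun t ht => ?_)
    rw [interior_Ici] at ht
    rw [(hf t).deriv]
    exact hf' t (le_of_lt ht)
  simpa [h0] using hm Set.self_mem_Ici hs hs

lemma hasDerivAt_upper (s : ℝ) :
    HasDerivAt (fun t : ℝ => 3 * t ^ 2 * (6 + t ^ 2) / (4 * (3 + t ^ 2) ^ 2))
      (s * (27 / (3 + s ^ 2) ^ 3)) s := by
  have hp := hasDerivAt_pow 2 s
  have h0 : 4 * (3 + s ^ 2) ^ 2 ≠ 0 := by positivity
  convert! ((hp.const_mul 3).mul (hp.const_add 6)).div (((hp.const_add 3).pow 2).const_mul 4) h0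
    using 1
  have h1 : 3 + s ^ 2 ≠ 0 := by positivity
  simp
  field_simp
  ring

lemma hasDerivAt_lower (s : ℝ) :
    HasDerivAt (fun t : ℝ => 3 * t ^ 2 * (12 + t ^ 2) / ((6 + t ^ 2) * (12 + 5 * t ^ 2)))
      (s * (108 * (48 + 8 * s ^ 2 - (s ^ 2) ^ 2) / (72 + 42 * s ^ 2 + 5 * (s ^ 2) ^ 2) ^ 2)) s := by
  have hp := hasDerivAt_pow 2 s
  have h0 : (6 + s ^ 2) * (12 + 5 * s ^ 2) ≠ 0 := by positivity
  convert! ((hp.const_mul 3).mul (hp.const_add 12)).div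
    ((hp.const_add 6).mul ((hp.const_mul 5).const_add 12)) h0 using 1
  have e : 72 + 42 * s ^ 2 + 5 * (s ^ 2) ^ 2 = (6 + s ^ 2) * (12 + 5 * s ^ 2) := by ring
  rw [e]
  simp
  field_simp
  ring


/-- **Rational bounds for `c(x) = -ln(cosh √x) + √x·tanh √x`.** For every real `x ≥ 0`,
`3x(12+x)/((6+x)(12+5x)) ≤ -ln(cosh √x) + √x·tanh √x ≤ 3x(6+x)/(4(3+x)²)`. -/
theorem rational_bounds_log_cosh (x : ℝ) (hx : 0 ≤ x) :
    3 * x * (12 + x) / ((6 + x) * (12 + 5 * x))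
        ≤ -Real.log (Real.cosh (Real.sqrt x)) + Real.sqrt x * Real.tanh (Real.sqrt x)
    ∧ -Real.log (Real.cosh (Real.sqrt x)) + Real.sqrt x * Real.tanh (Real.sqrt x)
        ≤ 3 * x * (6 + x) / (4 * (3 + x) ^ 2) := by
  obtain ⟨s, hs, rfl⟩ : ∃ s : ℝ, 0 ≤ s ∧ x = s ^ 2 :=
    ⟨Real.sqrt x, Real.sqrt_nonneg x, (Real.sq_sqrt hx).symm⟩
  rw [Real.sqrt_sq hs]
  constructor
  · refine sub_nonneg.mp (nonneg_of_hasDerivAt (by simp)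
      (fun t => (hasDerivAt_logCosh t).sub (hasDerivAt_lower t)) (fun t ht => ?_) hs)
    have hc : 0 < Real.cosh t ^ 2 := by have := Real.cosh_pos t; positivity
    rw [div_eq_mul_one_div, ← mul_sub]
    refine mul_nonneg ht (sub_nonneg.mpr ?_)
    rw [div_le_div_iff₀ (by positivity) hc, one_mul]
    exact cosh_sq_upper t
  · refine sub_nonneg.mp (nonneg_of_hasDerivAt (by simp)
      (fun t => (hasDerivAt_upper t).sub (hasDerivAt_logCosh t)) (fun t ht => ?_) hs)
    have hc : 0 < Real.cosh t ^ 2 := by have := Real.cosh_pos t; positivity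
    rw [div_eq_mul_one_div t, ← mul_sub]
    refine mul_nonneg ht (sub_nonneg.mpr ?_)
    rw [div_le_div_iff₀ hc (by positivity), one_mul]
    exact cosh_sq_lower t
end
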